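/- Let n ≥ 2 be an integer and let G be the grid P_n □ P_2. If j is an integer such that j ≠ 1 and ⌊n/2⌋ ≤ j ≤ n−1, then 2j ∈ S_SC(G). -/

import Mathlib

/-!  Common definitions: oriented graphs, geodesic convexity, convexity number,
strong convexity spectrum, and grid graphs. -/

variable {V : Type*}

/-- A directed walk of length `k` from `u` to `v` along the arc relation `A`,
encoded by the function `f` listing its vertices. -/
def IsDirWalk (A : V → V → Prop) (k : ℕ) (f : ℕ → V) (u v : V) : Prop :=
  f 0 = u ∧ f k = v ∧ ∀ i, i < k → A (f i) (f (i + 1))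

/-- There is a directed walk from `u` to `v`. -/
def DirReachable (A : V → V → Prop) (u v : V) : Prop :=
  ∃ k f, IsDirWalk A k f u v

/-- A digraph (given by its arc relation) is strongly connected. -/
def StrongConnected (A : V → V → Prop) : Prop :=
  ∀ u v : V, DirReachable A u v

/-- A `uv`-geodesic: a directed walk from `u` to `v` of minimum possible length
(such a walk is automatically a directed path). -/
def IsGeodesic (A : V → V → Prop) (k : ℕ) (f : ℕ → V) (u v : V) : Prop :=
  IsDirWalk A k f u v ∧ ∀ k' f', IsDirWalk A k' f' u v → k ≤ k'

/-- A nonempty vertex set `C` is convex if every vertex lying on a geodesic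
between two vertices of `C` (in either direction) belongs to `C`. -/
def DConvex (A : V → V → Prop) (C : Set V) : Prop :=
  C.Nonempty ∧ ∀ u ∈ C, ∀ v ∈ C, ∀ k f, IsGeodesic A k f u v → ∀ i ≤ k, f i ∈ C

/-- `A` is an orientation of the simple graph `G`: every arc is along an edge,
every edge gets an arc, and no edge gets both directions. -/
def IsOrientation (G : SimpleGraph V) (A : V → V → Prop) : Prop :=
  (∀ x y, A x y → G.Adj x y) ∧ (∀ x y, G.Adj x y → A x y ∨ A y x) ∧
    (∀ x y, A x y → ¬ A y x)

/-- The convexity number of a digraph: the maximum cardinality of a proper convex set. -/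
noncomputable def convexityNumber [Fintype V] (A : V → V → Prop) : ℕ :=
  sSup {k | ∃ C : Set V, DConvex A C ∧ C ≠ Set.univ ∧ C.ncard = k}

/-- The strong convexity spectrum of a graph: the set of convexity numbers of
its strongly connected orientations. -/
def strongConvexitySpectrum [Fintype V] (G : SimpleGraph V) : Set ℕ :=
  {k | ∃ A : V → V → Prop, IsOrientation G A ∧ StrongConnected A ∧ convexityNumber A = k}

/-- The grid graph `P_n □ P_m`. -/
def gridGraph (n m : ℕ) : SimpleGraph (Fin n × Fin m) :=
  (SimpleGraph.pathGraph n).boxProd (SimpleGraph.pathGraph m)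

/-! ### General facts about walks and geodesics -/

theorem exists_crossing (P : ℕ → Prop) (a k : ℕ) (hak : a ≤ k) (h0 : P a) (hk : ¬ P k) :
    ∃ t, a ≤ t ∧ t < k ∧ P t ∧ ¬ P (t + 1) := by
  induction k, hak using Nat.le_induction with
  | base => exact absurd h0 hk
  | succ m hm ih =>
    by_cases hp : P m
    · exact ⟨m, hm, by omega, hp, hk⟩
    · obtain ⟨t, h1, h2, h3, h4⟩ := ih hp
      exact ⟨t, h1, by omega, h3, h4⟩

theorem exists_geodesic {A : V → V → Prop} (hA : StrongConnected A) (u v : V) :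
    ∃ k f, IsGeodesic A k f u v := by
  classical
  have h : ∃ k, ∃ f, IsDirWalk A k f u v := hA u v
  obtain ⟨f, hf⟩ := Nat.find_spec h
  exact ⟨Nat.find h, f, hf, fun k' f' h' => Nat.find_min' h ⟨f', h'⟩⟩

theorem dirReachable_of_rtg {A : V → V → Prop} {u v : V} (h : Relation.ReflTransGen A u v) :
    DirReachable A u v := by
  induction h with
  | refl => exact ⟨0, fun _ => u, rfl, rfl, fun i hi => absurd hi (by omega)⟩
  | @tail b c _ hbc ih =>
    obtain ⟨k, f, h0, hk, hs⟩ := ih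
    refine ⟨k + 1, fun t => if t ≤ k then f t else c, by simp [h0], by simp, ?_⟩
    intro i hi
    by_cases hik : i = k
    · subst hik; simpa [hk] using hbc
    · have h1 : i ≤ k := by omega
      have h2 : i + 1 ≤ k := by omega
      simpa [h1, h2] using hs i (by omega)

/-- A geodesic cannot be shortened by an arc between non-consecutive vertices. -/
theorem no_shortcut {A : V → V → Prop} {k : ℕ} {f : ℕ → V} {u v : V}
    (hg : IsGeodesic A k f u v) {p q : ℕ} (hpq : p + 1 < q) (hqk : q ≤ k)
    (harc : A (f p) (f q)) : False := by
  obtain ⟨⟨h0, hk, hs⟩, hmin⟩ := hg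
  have := hmin (k - (q - p - 1)) (fun t => if t ≤ p then f t else f (t + (q - p - 1)))
    ⟨by simp [h0], by
      have h1 : ¬ (k - (q - p - 1) ≤ p) := by omega
      have h2 : k - (q - p - 1) + (q - p - 1) = k := by omega
      simp [h1, h2, hk], by
      intro i hi
      by_cases h1 : i + 1 ≤ p
      · have h2 : i ≤ p := by omega
        simpa [h1, h2] using hs i (by omega)
      · by_cases h2 : i = p
        · subst h2
          have h3 : i + 1 + (q - i - 1) = q := by omega
          simpa [h3] using harc
        · have h3 : ¬ i ≤ p := by omega
          have h4 : i + 1 + (q - p - 1) = i + (q - p - 1) + 1 := by omega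
          simp only [h1, h3, if_false, h4]
          exact hs _ (by omega)⟩
  omega

theorem mem_of_geod3 {A : V → V → Prop} {C : Set V} (hC : DConvex A C) {x0 x1 x2 x3 : V}
    (h01 : A x0 x1) (h12 : A x1 x2) (h23 : A x2 x3)
    (hmin : ∀ k f, IsDirWalk A k f x0 x3 → 3 ≤ k) (h0 : x0 ∈ C) (h3 : x3 ∈ C) :
    x1 ∈ C ∧ x2 ∈ C := by
  have hw : IsGeodesic A 3 (fun t => match t with | 0 => x0 | 1 => x1 | 2 => x2 | _ => x3)
      x0 x3 := by
    refine ⟨⟨rfl, rfl, ?_⟩, hmin⟩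
    intro i hi
    interval_cases i <;> assumption
  have h := hC.2 x0 h0 x3 h3 _ _ hw
  exact ⟨h 1 (by norm_num), h 2 (by norm_num)⟩

theorem mem_of_geod5 {A : V → V → Prop} {C : Set V} (hC : DConvex A C) {x0 x1 x2 x3 x4 x5 : V}
    (h01 : A x0 x1) (h12 : A x1 x2) (h23 : A x2 x3) (h34 : A x3 x4) (h45 : A x4 x5)
    (hmin : ∀ k f, IsDirWalk A k f x0 x5 → 5 ≤ k) (h0 : x0 ∈ C) (h5 : x5 ∈ C) :
    x1 ∈ C ∧ x4 ∈ C := by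
  have hw : IsGeodesic A 5
      (fun t => match t with | 0 => x0 | 1 => x1 | 2 => x2 | 3 => x3 | 4 => x4 | _ => x5)
      x0 x5 := by
    refine ⟨⟨rfl, rfl, ?_⟩, hmin⟩
    intro i hi
    interval_cases i <;> assumption
  have h := hC.2 x0 h0 x5 h5 _ _ hw
  exact ⟨h 1 (by norm_num), h 4 (by norm_num)⟩

/-! ### Orientations of the ladder -/

/-- Orientation of the ladder: `r i` says that rung `i` goes from row 0 to row 1, and `s i` says
that between columns `i`, `i+1` row 0 goes right and row 1 goes left (otherwise reversed). -/
def ladderArc (n : ℕ) (r s : ℕ → Prop) (x y : Fin n × Fin 2) : Prop :=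
  (x.1.val = y.1.val ∧ ((x.2.val = 0 ∧ y.2.val = 1 ∧ r x.1.val) ∨
      (x.2.val = 1 ∧ y.2.val = 0 ∧ ¬ r x.1.val))) ∨
  (y.1.val = x.1.val + 1 ∧ x.2.val = y.2.val ∧ (x.2.val = 0 ↔ s x.1.val)) ∨
  (x.1.val = y.1.val + 1 ∧ x.2.val = y.2.val ∧ (x.2.val = 1 ↔ s y.1.val))

/-- A column contained in `C`. -/
def FullCol {n : ℕ} (C : Set (Fin n × Fin 2)) (i : ℕ) : Prop :=
  ∀ x : Fin n × Fin 2, x.1.val = i → x ∈ C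

section
variable {n : ℕ} {r s : ℕ → Prop}

theorem vert_ext {x y : Fin n × Fin 2} (h1 : x.1.val = y.1.val) (h2 : x.2.val = y.2.val) :
    x = y := Prod.ext (Fin.ext h1) (Fin.ext h2)

theorem ladder_orientation : IsOrientation (gridGraph n 2) (ladderArc n r s) := by
  refine ⟨?_, ?_, ?_⟩
  · rintro ⟨x1, x2⟩ ⟨y1, y2⟩ h
    simp only [ladderArc] at h
    simp only [gridGraph, SimpleGraph.boxProd_adj, SimpleGraph.pathGraph_adj, Fin.ext_iff]
    omega
  · rintro ⟨x1, x2⟩ ⟨y1, y2⟩ h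
    simp only [gridGraph, SimpleGraph.boxProd_adj, SimpleGraph.pathGraph_adj, Fin.ext_iff] at h
    simp only [ladderArc]
    have := x2.2
    have := y2.2
    rcases h with ⟨h | h, h'⟩ | ⟨h | h, h'⟩
    · by_cases hs : s x1.val <;> simp [hs, ← h, h'] <;> omega
    · by_cases hs : s y1.val <;> simp [hs, ← h, h'] <;> omega
    · by_cases hs : r x1.val <;> simp only [hs, ← h'] <;> simp <;> omega
    · by_cases hs : r x1.val <;> simp only [hs, ← h'] <;> simp <;> omega
  · rintro ⟨x1, x2⟩ ⟨y1, y2⟩ h h'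
    simp only [ladderArc] at h h'
    rcases h with ⟨h1, h2⟩ | ⟨h1, h2, h3⟩ | ⟨h1, h2, h3⟩ <;>
    rcases h' with ⟨h1', h2'⟩ | ⟨h1', h2', h3'⟩ | ⟨h1', h2', h3'⟩ <;> try omega
    rotate_left
    · have := h3.trans h3'.symm
      omega
    · have := h3.trans h3'.symm
      omega
    rw [h1] at h2
    rcases h2 with ⟨_, _, h2⟩ | ⟨_, _, h2⟩ <;> rcases h2' with ⟨_, _, h2'⟩ | ⟨_, _, h2'⟩ <;>
    first | omega | contradiction

theorem ladder_parity {x y : Fin n × Fin 2} (h : ladderArc n r s x y) :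
    (x.1.val + x.2.val + y.1.val + y.2.val) % 2 = 1 := by
  simp only [ladderArc] at h
  omega

/-- Closing up a directed 4-cycle. -/
theorem square_closure {C : Set (Fin n × Fin 2)} (hC : DConvex (ladderArc n r s) C)
    {x0 x1 x2 x3 : Fin n × Fin 2}
    (h01 : ladderArc n r s x0 x1) (h12 : ladderArc n r s x1 x2) (h23 : ladderArc n r s x2 x3)
    (h30 : ladderArc n r s x3 x0) (h0 : x0 ∈ C) (h3 : x3 ∈ C) : x1 ∈ C ∧ x2 ∈ C := by
  refine mem_of_geod3 hC h01 h12 h23 ?_ h0 h3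
  rintro k f ⟨hf0, hfk, hs⟩
  by_contra hk
  have hp := ladder_parity h30
  interval_cases k
  · rw [hf0] at hfk
    subst hfk
    omega
  · have := hs 0 (by omega)
    rw [hf0, hfk] at this
    exact (ladder_orientation (n := n) (r := r) (s := s)).2.2 _ _ this h30
  · have h1 := ladder_parity (hs 0 (by omega))
    have h2 := ladder_parity (hs 1 (by omega))
    simp only [Nat.reduceAdd] at h1 h2
    rw [hf0] at h1
    rw [hfk] at h2
    omega

theorem crossing_full (hA : StrongConnected (ladderArc n r s)) {C : Set (Fin n × Fin 2)}
    (hC : DConvex (ladderArc n r s) C) {x y : Fin n × Fin 2} (hx : x ∈ C) (hy : y ∈ C) (c : ℕ)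
    (hxc : x.1.val ≤ c) (hyc : c < y.1.val) : FullCol C c ∧ FullCol C (c + 1) := by
  obtain ⟨k, f, hf⟩ := exists_geodesic hA x y
  obtain ⟨l, g, hg⟩ := exists_geodesic hA y x
  obtain ⟨t, -, ht, h1, h2⟩ := exists_crossing (fun t => (f t).1.val ≤ c) 0 k (by omega)
    (by rw [hf.1.1]; exact hxc) (by rw [hf.1.2.1]; omega)
  obtain ⟨t', -, ht', h1', h2'⟩ := exists_crossing (fun t => ¬ (g t).1.val ≤ c) 0 l (by omega)
    (by rw [hg.1.1]; omega) (by rw [hg.1.2.1]; omega)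
  have m1 := hC.2 x hx y hy k f hf t (by omega)
  have m2 := hC.2 x hx y hy k f hf (t + 1) (by omega)
  have m3 := hC.2 y hy x hx l g hg t' (by omega)
  have m4 := hC.2 y hy x hx l g hg (t' + 1) (by omega)
  have a1 := hf.1.2.2 t ht
  have a2 := hg.1.2.2 t' ht'
  generalize f t = p at *
  generalize f (t + 1) = q at *
  generalize g t' = p' at *
  generalize g (t' + 1) = q' at *
  simp only [ladderArc] at a1 a2
  have b1 : q.1.val = c + 1 ∧ p.1.val = c ∧ p.2.val = q.2.val ∧ (p.2.val = 0 ↔ s c) := by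
    rcases a1 with a | a | a
    · omega
    · have : p.1.val = c := by omega
      rw [this] at a
      exact ⟨a.1, this, a.2⟩
    · omega
  have b2 : p'.1.val = c + 1 ∧ q'.1.val = c ∧ p'.2.val = q'.2.val ∧ (p'.2.val = 1 ↔ s c) := by
    rcases a2 with a | a | a
    · omega
    · omega
    · have : q'.1.val = c := by omega
      rw [this] at a
      exact ⟨a.1, this, a.2⟩
  have b3 := b1.2.2.2.trans b2.2.2.2.symm
  have e1 := p.2.2
  have e2 := p'.2.2
  constructor
  · intro z hz
    have e3 := z.2.2
    by_cases h : z.2.val = p.2.val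
    · rw [vert_ext (x := z) (y := p) (by omega) h]; exact m1
    · rw [vert_ext (x := z) (y := q') (by omega) (by omega)]; exact m4
  · intro z hz
    have e3 := z.2.2
    by_cases h : z.2.val = p.2.val
    · rw [vert_ext (x := z) (y := q) (by omega) (by omega)]; exact m2
    · rw [vert_ext (x := z) (y := p') (by omega) (by omega)]; exact m3

/-- The square on columns `i`, `i+1` is a directed cycle. -/
def CycSq (r s : ℕ → Prop) (i : ℕ) : Prop := (s i ↔ r (i + 1)) ∧ (s i ↔ ¬ r i)

theorem fullCol_of {C : Set (Fin n × Fin 2)} {i : ℕ} (h : i < n)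
    (h0 : ((⟨i, h⟩, 0) : Fin n × Fin 2) ∈ C) (h1 : ((⟨i, h⟩, 1) : Fin n × Fin 2) ∈ C) :
    FullCol C i := by
  rintro ⟨⟨a, ha⟩, b⟩ rfl
  fin_cases b
  · exact h0
  · exact h1

/-- The two orientations of a cyclic square. -/
theorem cyc_arcs {i : ℕ} (h : CycSq r s i) (hi : i + 1 < n) :
    (ladderArc n r s (⟨i, by omega⟩, 0) (⟨i + 1, hi⟩, 0) ∧
      ladderArc n r s (⟨i + 1, hi⟩, 0) (⟨i + 1, hi⟩, 1) ∧
      ladderArc n r s (⟨i + 1, hi⟩, 1) (⟨i, by omega⟩, 1) ∧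
      ladderArc n r s (⟨i, by omega⟩, 1) (⟨i, by omega⟩, 0)) ∨
    (ladderArc n r s (⟨i + 1, hi⟩, 0) (⟨i, by omega⟩, 0) ∧
      ladderArc n r s (⟨i + 1, hi⟩, 1) (⟨i + 1, hi⟩, 0) ∧
      ladderArc n r s (⟨i, by omega⟩, 1) (⟨i + 1, hi⟩, 1) ∧
      ladderArc n r s (⟨i, by omega⟩, 0) (⟨i, by omega⟩, 1)) := by
  obtain ⟨h1, h2⟩ := h
  by_cases hs : s i
  · left
    have h3 := h1.1 hs
    have h4 := h2.1 hs
    simp [ladderArc, hs, h3, h4]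
  · right
    have h3 : ¬ r (i + 1) := fun h => hs (h1.2 h)
    have h4 : r i := by by_contra h; exact hs (h2.2 h)
    simp [ladderArc, hs, h3, h4]

theorem full_succ {C : Set (Fin n × Fin 2)} (hC : DConvex (ladderArc n r s) C) {i : ℕ}
    (h : CycSq r s i) (hi : i + 1 < n) (hF : FullCol C i) : FullCol C (i + 1) := by
  have f0 := hF (⟨i, by omega⟩, 0) rfl
  have f1 := hF (⟨i, by omega⟩, 1) rfl
  rcases cyc_arcs h hi with ⟨a, b, c, d⟩ | ⟨a, b, c, d⟩
  · obtain ⟨m1, m2⟩ := square_closure hC a b c d f0 f1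
    exact fullCol_of hi m1 m2
  · obtain ⟨m1, m2⟩ := square_closure hC c b a d f1 f0
    exact fullCol_of hi m2 m1

theorem full_pred {C : Set (Fin n × Fin 2)} (hC : DConvex (ladderArc n r s) C) {i : ℕ}
    (h : CycSq r s i) (hi : i + 1 < n) (hF : FullCol C (i + 1)) : FullCol C i := by
  have f0 := hF (⟨i + 1, by omega⟩, 0) rfl
  have f1 := hF (⟨i + 1, by omega⟩, 1) rfl
  rcases cyc_arcs h hi with ⟨a, b, c, d⟩ | ⟨a, b, c, d⟩
  · obtain ⟨m1, m2⟩ := square_closure hC c d a b f1 f0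
    exact fullCol_of _ m2 m1
  · obtain ⟨m1, m2⟩ := square_closure hC a d c b f0 f1
    exact fullCol_of _ m1 m2

theorem full_up {C : Set (Fin n × Fin 2)} (hC : DConvex (ladderArc n r s) C) {i : ℕ} (m : ℕ)
    (him : i ≤ m) (hm : m < n) (h : ∀ t, i ≤ t → t < m → CycSq r s t)
    (hF : FullCol C i) : FullCol C m := by
  induction m, him using Nat.le_induction with
  | base => exact hF
  | succ k hk ih =>
    exact full_succ hC (h k hk (by omega)) hm (ih (by omega) fun t h1 h2 => h t h1 (by omega))

theorem full_down {C : Set (Fin n × Fin 2)} (hC : DConvex (ladderArc n r s) C) {m : ℕ}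
    (d : ℕ) : ∀ i, i + d = m → m < n → (∀ t, i ≤ t → t < m → CycSq r s t) →
    FullCol C m → FullCol C i := by
  induction d with
  | zero => intro i hi _ _ hF; simpa [← hi] using hF
  | succ d ih =>
    intro i hi hm h hF
    exact full_pred hC (h i le_rfl (by omega)) (by omega)
      (ih (i + 1) (by omega) hm (fun t h1 h2 => h t (by omega) h2) hF)

/-- mutual reachability of a pair -/
def Mut (A : V → V → Prop) (x y : V) : Prop :=
  Relation.ReflTransGen A x y ∧ Relation.ReflTransGen A y x

theorem Mut.trans {A : V → V → Prop} {x y z : V} (h : Mut A x y) (h' : Mut A y z) : Mut A x z :=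
  ⟨h.1.trans h'.1, h'.2.trans h.2⟩

theorem Mut.symm {A : V → V → Prop} {x y : V} (h : Mut A x y) : Mut A y x := ⟨h.2, h.1⟩

theorem mut_of_cycle {A : V → V → Prop} {a b c d : V} (h1 : A a b) (h2 : Relation.ReflTransGen A b c)
    (h3 : A c d) (h4 : Relation.ReflTransGen A d a) : Mut A a d ∧ Mut A a b ∧ Mut A b c := by
  have h1 := Relation.ReflTransGen.single h1
  have h3 := Relation.ReflTransGen.single h3
  exact ⟨⟨h1.trans (h2.trans h3), h4⟩, ⟨h1, h2.trans (h3.trans h4)⟩, ⟨h2, h3.trans (h4.trans h1)⟩⟩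

/-- Column `i` is mutually reachable inside. -/
def ColMut (n : ℕ) (r s : ℕ → Prop) (i : ℕ) : Prop :=
  ∀ h : i < n, Mut (ladderArc n r s) (⟨i, h⟩, 0) (⟨i, h⟩, 1)

/-- Columns `i` and `i+1` are mutually reachable. -/
def CutMut (n : ℕ) (r s : ℕ → Prop) (i : ℕ) : Prop :=
  ∀ h : i + 1 < n, Mut (ladderArc n r s) (⟨i, by omega⟩, 0) (⟨i + 1, h⟩, 0)

theorem cyc_mut {i : ℕ} (h : CycSq r s i) (hi : i + 1 < n) :
    ColMut n r s i ∧ ColMut n r s (i + 1) := by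
  rcases cyc_arcs h hi with ⟨a, b, c, d⟩ | ⟨a, b, c, d⟩
  · have h := mut_of_cycle a (.single b) c (.single d)
    exact ⟨fun _ => h.1, fun _ => h.2.2⟩
  · have h := mut_of_cycle c (.single b) a (.single d)
    exact ⟨fun _ => h.1.symm, fun _ => h.2.2.symm⟩

theorem cut_mut {i : ℕ} (h1 : ColMut n r s i) (h2 : ColMut n r s (i + 1)) : CutMut n r s i := by
  intro hi
  have h1 := h1 (by omega)
  have h2 := h2 hi
  by_cases hs : s i
  · have a : ladderArc n r s (⟨i, by omega⟩, 0) (⟨i + 1, hi⟩, 0) := by simp [ladderArc, hs]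
    have b : ladderArc n r s (⟨i + 1, hi⟩, 1) (⟨i, by omega⟩, 1) := by simp [ladderArc, hs]
    exact (mut_of_cycle a h2.1 b h1.2).2.1
  · have a : ladderArc n r s (⟨i + 1, by omega⟩, 0) (⟨i, by omega⟩, 0) := by simp [ladderArc, hs]
    have b : ladderArc n r s (⟨i, by omega⟩, 1) (⟨i + 1, by omega⟩, 1) := by simp [ladderArc, hs]
    exact (mut_of_cycle a h1.1 b h2.2).2.1.symm

theorem strong_of_colMut (h : ∀ i, i < n → ColMut n r s i) :
    StrongConnected (ladderArc n r s) := by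
  have key : ∀ i (hi : i < n),
      Mut (ladderArc n r s) (⟨0, by omega⟩, 0) (⟨i, hi⟩, 0) := by
    intro i
    induction i with
    | zero => intro hi; exact ⟨.refl, .refl⟩
    | succ k ih =>
      intro hi
      exact (ih (by omega)).trans (cut_mut (h k (by omega)) (h (k + 1) hi) hi)
  have key2 : ∀ x : Fin n × Fin 2,
      Mut (ladderArc n r s) (⟨0, by have := x.1.2; omega⟩, 0) x := by
    rintro ⟨⟨i, hi⟩, p⟩
    fin_cases p
    · exact key i hi
    · exact (key i hi).trans (h i hi hi)
  intro u v
  exact dirReachable_of_rtg ((key2 u).2.trans (key2 v).1)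

/-- An initial block of columns is convex if its last rung is a shortcut. -/
theorem block_convex {c : ℕ} (hc : c < n) (hr : r c) (hs : s c) :
    DConvex (ladderArc n r s) {x | x.1.val < c + 1} := by
  refine ⟨⟨(⟨c, hc⟩, 0), by simp⟩, ?_⟩
  intro u hu v hv k f hg i hi
  by_contra hn
  simp only [Set.mem_ofPred_eq] at hu hv hn
  obtain ⟨p, -, hp, h1, h2⟩ := exists_crossing (fun t => (f t).1.val < c + 1) 0 i (by omega)
    (by rw [hg.1.1]; exact hu) hn
  obtain ⟨q, hq', hq, h3, h4⟩ := exists_crossing (fun t => ¬ (f t).1.val < c + 1) i k hi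
    hn (by rw [hg.1.2.1]; omega)
  refine no_shortcut hg (p := p) (q := q + 1) (by omega) (by omega) ?_
  have a1 := hg.1.2.2 p (by omega)
  have a2 := hg.1.2.2 q (by omega)
  simp only [ladderArc] at a1 a2 ⊢
  have b1 : (f p).1.val = c ∧ (f p).2.val = 0 := by
    rcases a1 with a | a | a
    · omega
    · have : (f p).1.val = c := by omega
      rw [this] at a
      exact ⟨this, a.2.2.2 hs⟩
    · omega
  have b2 : (f (q + 1)).1.val = c ∧ (f (q + 1)).2.val = 1 := by
    rcases a2 with a | a | a
    · omega
    · omega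
    · have : (f (q + 1)).1.val = c := by omega
      rw [this] at a
      have := a.2.2.2 hs
      omega
  left
  refine ⟨by omega, Or.inl ⟨b1.2, b2.2, ?_⟩⟩
  rw [b1.1]; exact hr

/-- The turning column. -/
theorem turn_min {c : ℕ} (hc : c + 1 < n) (hr0 : r c) (hr1 : r (c + 1)) (hr2 : r (c + 2))
    (hs0 : s c) (hs1 : ¬ s (c + 1)) (k : ℕ) (f : ℕ → Fin n × Fin 2)
    (hf : IsDirWalk (ladderArc n r s) k f (⟨c + 1, hc⟩, 1) (⟨c + 1, hc⟩, 0)) : 5 ≤ k := by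
  obtain ⟨h0, hk, hs⟩ := hf
  by_contra hlt
  have hpar : ∀ t, t ≤ k → ((f t).1.val + (f t).2.val + t + c) % 2 = 0 := by
    intro t
    induction t with
    | zero => intro _; rw [h0]; simp; omega
    | succ t ih =>
      intro ht
      have := ih (by omega)
      have := ladder_parity (hs t (by omega))
      omega
  have hpk := hpar k le_rfl
  rw [hk] at hpk
  simp at hpk
  have hfirst : 0 < k := by omega
  have a0 := hs 0 hfirst
  rw [h0] at a0
  obtain ⟨l, rfl⟩ : ∃ l, k = l + 1 := ⟨k - 1, by omega⟩
  have al := hs l (by omega)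
  rw [hk] at al
  have hl : l = 0 ∨ l = 2 := by omega
  rcases hl with rfl | rfl
  · rw [h0] at al
    simp [ladderArc, hr1] at al
  · have am := hs 1 (by omega)
    generalize f (0 + 1) = p at *
    simp only [Nat.reduceAdd] at am
    generalize f 2 = q at *
    have b0 : p.2.val = 1 ∧ (p.1.val = c ∨ p.1.val = c + 2) := by
      simp only [ladderArc, hr1] at a0
      simp at a0
      omega
    have b1 : q.2.val = 0 := by
      simp only [ladderArc] at al
      simp at al
      rcases al with ⟨e, _, h⟩ | h | h
      · rw [e] at h; exact absurd hr1 h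
      · omega
      · omega
    simp only [ladderArc, b0.1, b1] at am
    rcases b0.2 with h | h <;> simp [h, hr0, hr2] at am
end

theorem ncard_block (n lo hi : ℕ) (h : hi ≤ n) :
    ({x : Fin n × Fin 2 | lo ≤ x.1.val ∧ x.1.val < hi}).ncard = 2 * (hi - lo) := by
  have h1 : ((Finset.Ico lo hi ×ˢ Finset.range 2 : Finset (ℕ × ℕ)) : Set (ℕ × ℕ)).ncard
      = 2 * (hi - lo) := by
    rw [Set.ncard_coe_finset]; simp [mul_comm]
  rw [← h1]
  refine Set.ncard_congr (fun x _ => (x.1.val, x.2.val)) ?_ ?_ ?_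
  · rintro ⟨a, b⟩ hx
    have := b.2
    simp at hx ⊢
    omega
  · rintro x y _ _ hxy
    simp only [Prod.mk.injEq] at hxy
    exact vert_ext hxy.1 hxy.2
  · rintro ⟨a, b⟩ hx
    simp at hx
    exact ⟨(⟨a, by omega⟩, ⟨b, by omega⟩), by simpa using hx.1, rfl⟩

theorem ncard_le_of_cols {n : ℕ} (lo hi : ℕ) (h : hi ≤ n) (C : Set (Fin n × Fin 2))
    (hC : ∀ x ∈ C, lo ≤ x.1.val ∧ x.1.val < hi) : C.ncard ≤ 2 * (hi - lo) := by
  rw [← ncard_block n lo hi h]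
  exact Set.ncard_le_ncard hC (Set.toFinite _)

/-- Realizable values `2j` in the strong convexity spectrum of `P_n □ P_2`. -/
theorem two_j_mem_strongConvexitySpectrum_grid_n2 (n : ℕ) (hn : 2 ≤ n)
    (j : ℕ) (hj1 : j ≠ 1) (hjl : n / 2 ≤ j) (hju : j ≤ n - 1) :
    2 * j ∈ strongConvexitySpectrum (gridGraph n 2) := by
  obtain ⟨c, rfl⟩ : ∃ c, j = c + 2 := ⟨j - 2, by omega⟩
  -- columns `0, …, c+1` form the block, column `c+2` is special
  let r : ℕ → Prop := fun i => ((i + c) % 2 = 1) ∨ (i = c + 2 ∧ n ≠ c + 4)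
  let s : ℕ → Prop := fun i => i = c + 1 ∨ ((i + c) % 2 = 0 ∧ ¬ (i = c + 2 ∧ n ≠ c + 4))
  have hcyc1 : ∀ t, t ≤ c → CycSq r s t := by
    intro t ht; simp only [CycSq, r, s]; omega
  have hcyc2 : ∀ t, c + 3 ≤ t → CycSq r s t := by
    intro t ht; simp only [CycSq, r, s]; omega
  have hcyc3 : n = c + 4 → CycSq r s (c + 2) := by
    intro ht; simp only [CycSq, r, s]; omega
  have r1 : r (c + 1) := by simp only [r]; omega
  have s1 : s (c + 1) := Or.inl rfl
  have r2 : n ≠ c + 4 → r (c + 2) := fun h => Or.inr ⟨rfl, h⟩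
  have s2 : n ≠ c + 4 → ¬ s (c + 2) := by
    rintro h (h' | ⟨_, h'⟩)
    · omega
    · exact h' ⟨rfl, h⟩
  have r3 : r (c + 3) := by simp only [r]; omega
  have s0 : s c := by simp only [s]; omega
  have r0 : ¬ r c := by simp only [r]; omega
  have s3 : ¬ s (c + 3) := by simp only [s]; omega
  have r4 : ¬ r (c + 4) := by simp only [r]; omega
  clear_value r s
  have hcol1 : ColMut n r s (c + 1) := (cyc_mut (hcyc1 c le_rfl) (by omega)).2
  have hstrong : StrongConnected (ladderArc n r s) := by
    apply strong_of_colMut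
    intro i hi
    rcases lt_trichotomy i (c + 2) with h | h | h
    · rcases Nat.lt_or_ge i (c + 1) with h' | h'
      · exact (cyc_mut (hcyc1 i (by omega)) (by omega)).1
      · obtain rfl : i = c + 1 := by omega
        exact hcol1
    · subst h
      by_cases hE : n = c + 4
      · exact (cyc_mut (hcyc3 hE) (by omega)).1
      · have a : ladderArc n r s (⟨c + 1, by omega⟩, 0) (⟨c + 2, hi⟩, 0) := by
          simp [ladderArc, s1]
        have b : ladderArc n r s (⟨c + 2, hi⟩, 0) (⟨c + 2, hi⟩, 1) := by
          simp [ladderArc, r2 hE]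
        have d : ladderArc n r s (⟨c + 2, hi⟩, 1) (⟨c + 1, by omega⟩, 1) := by
          simp [ladderArc, s1]
        intro _
        exact (mut_of_cycle a (.single b) d (hcol1 _).2).2.2
    · by_cases hE : n = c + 4
      · obtain rfl : i = c + 2 + 1 := by omega
        exact (cyc_mut (hcyc3 hE) (by omega)).2
      · rcases Nat.lt_or_ge (c + 3) i with h' | h'
        · obtain ⟨i, rfl⟩ : ∃ i', i = i' + 1 := ⟨i - 1, by omega⟩
          exact (cyc_mut (hcyc2 i (by omega)) (by omega)).2
        · obtain rfl : i = c + 3 := by omega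
          exact (cyc_mut (hcyc2 _ le_rfl) (by omega)).1
  refine ⟨ladderArc n r s, ladder_orientation, hstrong, ?_⟩
  refine IsGreatest.csSup_eq ⟨?_, ?_⟩
  · refine ⟨_, block_convex (c := c + 1) (by omega) r1 s1, ?_, ?_⟩
    · intro h
      have : ((⟨c + 2, by omega⟩, 0) : Fin n × Fin 2) ∈ {x : Fin n × Fin 2 | x.1.val < c + 1 + 1} := by
        rw [h]; trivial
      simp at this
    · have := ncard_block n 0 (c + 2) (by omega)
      have e : {x : Fin n × Fin 2 | x.1.val < c + 1 + 1} =
          {x : Fin n × Fin 2 | 0 ≤ x.1.val ∧ x.1.val < c + 2} :=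
        Set.ext fun x => ⟨fun h => ⟨Nat.zero_le _, h⟩, fun h => h.2⟩
      rw [e, this, Nat.sub_zero]
  · rintro k ⟨C, hC, hne, rfl⟩
    by_contra hbig
    push Not at hbig
    -- there are vertices outside each small union of columns
    have hout : ∀ lo hi, hi ≤ n → hi - lo ≤ c + 2 →
        ∃ x ∈ C, ¬ (lo ≤ x.1.val ∧ x.1.val < hi) := by
      intro lo hi h1 h2
      by_contra hcon
      push Not at hcon
      have := ncard_le_of_cols lo hi h1 C hcon
      omega
    apply hne
    have huniv : ∀ (_ : ∀ i, i < n → FullCol C i), C = Set.univ := by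
      intro h
      ext x
      exact ⟨fun _ => trivial, fun _ => h x.1.val x.1.2 x rfl⟩
    apply huniv
    have hleft : FullCol C (c + 1) → ∀ i, i ≤ c + 1 → FullCol C i := by
      intro h i hi
      exact full_down hC (c + 1 - i) i (by omega) (by omega) (fun t _ h => hcyc1 t (by omega)) h
    obtain ⟨y, hy, hy'⟩ := hout 0 (c + 2) (by omega) (by omega)
    by_cases hE : n = c + 4
    · obtain ⟨x, hx, hx'⟩ := hout (c + 2) n le_rfl (by omega)
      have := x.1.2
      obtain ⟨f1, f2⟩ := crossing_full hstrong hC hx hy (c + 1) (by omega) (by omega)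
      intro i hi
      rcases Nat.lt_or_ge i (c + 2) with h | h
      · exact hleft f1 i (by omega)
      · refine full_up hC i h hi (fun t h1 h2 => ?_) f2
        obtain rfl : t = c + 2 := by omega
        exact hcyc3 hE
    · have hmid : FullCol C (c + 2) := by
        obtain ⟨x, hx, hx'⟩ := hout (c + 3) n le_rfl (by omega)
        obtain ⟨z, hz, hz'⟩ := hout (c + 2) (c + 3) (by omega) (by omega)
        have := x.1.2
        by_cases h1 : c + 2 < z.1.val
        · exact (crossing_full hstrong hC hx hz (c + 2) (by omega) (by omega)).1
        · exact (crossing_full hstrong hC hz hy (c + 1) (by omega) (by omega)).2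
      have m0 := hmid (⟨c + 2, by omega⟩, 0) rfl
      have m1 := hmid (⟨c + 2, by omega⟩, 1) rfl
      have hmin := turn_min (n := n) (c := c + 1) (by omega) r1 (r2 hE) r3 s1 (s2 hE)
      have f1 : FullCol C (c + 1) := by
        obtain ⟨q1, q2⟩ := mem_of_geod5 hC (x1 := (⟨c + 1, by omega⟩, 1))
          (x2 := (⟨c, by omega⟩, 1)) (x3 := (⟨c, by omega⟩, 0)) (x4 := (⟨c + 1, by omega⟩, 0))
          (by simp [ladderArc, s1]) (by simp [ladderArc, s0]) (by simp [ladderArc, r0])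
          (by simp [ladderArc, s0]) (by simp [ladderArc, s1]) hmin m1 m0
        exact fullCol_of _ q2 q1
      intro i hi
      rcases lt_trichotomy i (c + 2) with h | h | h
      · exact hleft f1 i (by omega)
      · subst h; exact hmid
      · have f3 : FullCol C (c + 3) := by
          obtain ⟨q1, q2⟩ := mem_of_geod5 hC (x1 := (⟨c + 3, by omega⟩, 1))
            (x2 := (⟨c + 4, by omega⟩, 1)) (x3 := (⟨c + 4, by omega⟩, 0))
            (x4 := (⟨c + 3, by omega⟩, 0))
            (by simp [ladderArc, s2 hE]) (by simp [ladderArc, s3]) (by simp [ladderArc, r4])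
            (by simp [ladderArc, s3]) (by simp [ladderArc, s2 hE]) hmin m1 m0
          exact fullCol_of _ q2 q1
        exact full_up hC i (by omega) hi (fun t h1 h2 => hcyc2 t h1) f3
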